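/- Intermediate step for the random Schmidt robustness bound: let d ≥ 2, 1 ≤ n < d, and let a_1, …, a_d ≥ 0 with Σ_i a_i² = 1; set ψ = Σ_i a_i |ii⟩. Then the matrix ((dn−1)/(d−n)) · ψψ† + Σ_{i,j} a_i a_j |ij⟩⟨ij| on ℂ^d ⊗ ℂ^d has Schmidt number at most n. -/

import Mathlib

/-!
Let `D` be the diagonal matrix with entries `√a_i`. The local operator `D ⊗ D` maps `∑ |ii⟩` to
`ψ`, conjugation by it maps `1` to `∑ a_i a_j |ij⟩⟨ij|`, and local operators do not increase the
Schmidt number; so everything reduces to the isotropic operator `1 + ((dn-1)/(d-n)) Ω`, where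
`Ω = ∑ |ii⟩⟨jj|`. Put `Δ = ∑ |ii⟩⟨ii|`. Averaging `v v†`, for `v = ∑_{i ∈ S} |ii⟩`, over the
`n`-subsets `S` shows that `Δ + s Ω`, with `s = (n-1)/(d-n)`, has Schmidt number at most `n`.
Averaging over conjugations by `Ū ⊗ U`, where `U` is a unitary with entries of constant modulus
multiplied by random diagonal phases, fixes `Ω` and turns `d Δ` into `Ω + 1 - Δ`; so
`Ω + 1 - Δ + d s Ω` has Schmidt number at most `n` as well. Adding the two operators gives
`1 + (1 + (d + 1) s) Ω`, and `1 + (d + 1) s = (dn-1)/(d-n)`.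
-/

open Matrix BigOperators Kronecker ComplexOrder

/-- The d×d matrix `M_v` associated with a vector `v` on ℂ^d ⊗ ℂ^d, `(M_v)_{ij} = v (i,j)`. -/
def toMat (d : ℕ) (v : Fin d × Fin d → ℂ) : Matrix (Fin d) (Fin d) ℂ :=
  Matrix.of fun i j => v (i, j)

/-- `ρ` has Schmidt number at most `n`: it is a finite sum of `w wᴴ` with each `w` of
Schmidt rank (i.e. rank of the associated d×d matrix) at most `n`. -/
def SchmidtNumberLE (d : ℕ) (ρ : Matrix (Fin d × Fin d) (Fin d × Fin d) ℂ) (n : ℕ) : Prop :=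
  ∃ (k : ℕ) (w : Fin k → (Fin d × Fin d → ℂ)),
    (∀ i, (toMat d (w i)).rank ≤ n) ∧
    ρ = ∑ i, Matrix.vecMulVec (w i) (star (w i))

/-- The vector `Σ_i a_i |ii⟩`. -/
noncomputable def ketDiag (d : ℕ) (a : Fin d → ℝ) : Fin d × Fin d → ℂ :=
  fun p => if p.1 = p.2 then ((a p.1 : ℝ) : ℂ) else 0

section LocalConj

variable {ι : Type*} [Fintype ι]

/-- Conjugation `X ↦ (A ⊗ B) X (A ⊗ B)ᴴ` by a local operator. -/
noncomputable def localConj (A B : Matrix ι ι ℂ) :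
    Matrix (ι × ι) (ι × ι) ℂ →ₗ[ℂ] Matrix (ι × ι) (ι × ι) ℂ where
  toFun X := (A ⊗ₖ B) * X * (A ⊗ₖ B)ᴴ
  map_add' X Y := by rw [Matrix.mul_add, Matrix.add_mul]
  map_smul' c X := by rw [Matrix.mul_smul, Matrix.smul_mul, RingHom.id_apply]

theorem localConj_apply (A B : Matrix ι ι ℂ) (X : Matrix (ι × ι) (ι × ι) ℂ) :
    localConj A B X = (A ⊗ₖ B) * X * (A ⊗ₖ B)ᴴ := rfl

theorem localConj_vecMulVec (A B : Matrix ι ι ℂ) (w : ι × ι → ℂ) :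
    localConj A B (vecMulVec w (star w)) =
      vecMulVec ((A ⊗ₖ B) *ᵥ w) (star ((A ⊗ₖ B) *ᵥ w)) := by
  rw [localConj_apply, mul_vecMulVec, vecMulVec_mul, ← star_mulVec]

end LocalConj

section Operators

variable {ι : Type*} [DecidableEq ι]

variable (ι) in
/-- The unnormalised maximally entangled operator `Ω = Σ_{i,j} |ii⟩⟨jj|`. -/
def maxEntangled : Matrix (ι × ι) (ι × ι) ℂ :=
  vecMulVec (vec 1) (star (vec 1))

variable (ι) in
/-- The unnormalised maximally correlated classical operator `Δ = Σ_i |ii⟩⟨ii|`. -/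
def classicallyCorrelated : Matrix (ι × ι) (ι × ι) ℂ :=
  diagonal (vec 1)

theorem maxEntangled_apply (i j k l : ι) :
    maxEntangled ι (i, j) (k, l) = if i = j ∧ k = l then 1 else 0 := by
  simp [maxEntangled, vecMulVec_apply, vec, one_apply, ← ite_and, eq_comm, and_comm]

theorem classicallyCorrelated_apply (i j k l : ι) :
    classicallyCorrelated ι (i, j) (k, l) =
      if (i = j ∧ k = l) ∧ i = k ∧ j = l then 1 else 0 := by
  simp only [classicallyCorrelated, diagonal_apply, vec, one_apply, Prod.mk.injEq]
  grind

variable [Fintype ι]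

theorem localConj_maxEntangled (A B : Matrix ι ι ℂ) :
    localConj A B (maxEntangled ι) = vecMulVec (vec (B * Aᵀ)) (star (vec (B * Aᵀ))) := by
  rw [maxEntangled, localConj_vecMulVec, kronecker_mulVec_vec, mul_one]

theorem localConj_one (A B : Matrix ι ι ℂ) :
    localConj A B 1 = (A * Aᴴ) ⊗ₖ (B * Bᴴ) := by
  rw [localConj_apply, mul_one, conjTranspose_kronecker, mul_kronecker_mul]

theorem localConj_classicallyCorrelated_apply (A B : Matrix ι ι ℂ) (i j k l : ι) :
    localConj A B (classicallyCorrelated ι) (i, j) (k, l) =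
      ∑ m, A i m * B j m * star (A k m * B l m) := by
  rw [localConj_apply, classicallyCorrelated, mul_apply]
  simp [mul_diagonal, Fintype.sum_prod_type, vec, one_apply]

end Operators

section Twirl

variable {ι : Type*} [Fintype ι] [DecidableEq ι]

theorem sum_stdAddChar_dotProduct (N : ℕ) [NeZero N] (v : ι → ZMod N) :
    ∑ t : ι → ZMod N, ZMod.stdAddChar (t ⬝ᵥ v) =
      if v = 0 then (N : ℂ) ^ Fintype.card ι else 0 := by
  calc ∑ t : ι → ZMod N, ZMod.stdAddChar (t ⬝ᵥ v)
      = ∑ t : ι → ZMod N, ∏ i, ZMod.stdAddChar (t i * v i) := by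
        exact Finset.sum_congr rfl fun t _ => map_prod ZMod.stdAddChar.toMonoidHom _ _
    _ = ∏ i, ∑ x : ZMod N, ZMod.stdAddChar (x * v i) :=
        (Fintype.prod_sum fun i x => ZMod.stdAddChar (x * v i)).symm
    _ = if v = 0 then (N : ℂ) ^ Fintype.card ι else 0 := by
        simp only [AddChar.sum_mulShift _ (ZMod.isPrimitive_stdAddChar N), ZMod.card,
          Nat.cast_ite, Nat.cast_zero, Fintype.prod_ite_zero, Finset.prod_const,
          Finset.card_univ, funext_iff, Pi.zero_apply]

theorem star_stdAddChar {N : ℕ} [NeZero N] (x : ZMod N) :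
    star (ZMod.stdAddChar x : ℂ) = ZMod.stdAddChar (-x) :=
  (AddChar.map_neg_eq_conj _ x).symm

theorem stdAddChar_mem_unitary {N : ℕ} [NeZero N] (x : ZMod N) :
    (ZMod.stdAddChar x : ℂ) ∈ unitary ℂ := by
  simp [Unitary.mem_iff, star_stdAddChar, ← AddChar.map_add_eq_mul]

-- Cube roots of unity suffice because `e_j + e_k = e_i + e_l` can be read off modulo `3`; modulo
-- `2` it would also hold for `j = k` and `i = l`.
theorem sum_stdAddChar_quartic (i j k l : ι) :
    ∑ t : ι → ZMod 3, star (ZMod.stdAddChar (t i) : ℂ) * ZMod.stdAddChar (t j) *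
        (ZMod.stdAddChar (t k) * star (ZMod.stdAddChar (t l) : ℂ)) =
      if (i = j ∧ k = l) ∨ (i = k ∧ j = l) then 3 ^ Fintype.card ι else 0 := by
  let e (m : ι) : ι → ZMod 3 := Pi.single m 1
  have hphase (t : ι → ZMod 3) :
      star (ZMod.stdAddChar (t i) : ℂ) * ZMod.stdAddChar (t j) *
          (ZMod.stdAddChar (t k) * star (ZMod.stdAddChar (t l) : ℂ)) =
        ZMod.stdAddChar (t ⬝ᵥ (e j + e k - (e i + e l))) := by
    simp only [star_stdAddChar, ← AddChar.map_add_eq_mul, e, dotProduct_sub, dotProduct_add,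
      dotProduct_single, mul_one]
    congr 1
    ring
  have hzero : e j + e k - (e i + e l) = 0 ↔ (i = j ∧ k = l) ∨ (i = k ∧ j = l) := by
    rw [sub_eq_zero, Pi.single_add_single_eq_single_add_single one_ne_zero one_ne_zero]
    have : (1 + 1 : ZMod 3) ≠ 0 := by decide
    grind
  simp only [hphase, sum_stdAddChar_dotProduct, hzero, Nat.cast_ofNat]

theorem isHadamard_diagonal_mul {R : Type*} [CommSemiring R] [StarRing R] {H : Matrix ι ι R}
    (hH : H.IsHadamard) {z : ι → R} (hz : ∀ i, z i ∈ unitary R) :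
    (diagonal z * H).IsHadamard where
  apply_mem i j := by
    rw [diagonal_mul]
    exact mul_mem (hz i) (hH.apply_mem i j)
  mul_conjTranspose := by
    rw [conjTranspose_mul, mul_assoc, ← mul_assoc H, hH.mul_conjTranspose]
    simp [diagonal_conjTranspose, (Unitary.mem_iff.1 (hz _)).2]
  conjTranspose_mul := by
    rw [conjTranspose_mul, mul_assoc, ← mul_assoc _ (diagonal z)]
    simp [diagonal_conjTranspose, (Unitary.mem_iff.1 (hz _)).1, hH.conjTranspose_mul]

theorem isHadamard_stdAddChar (N : ℕ) [NeZero N] :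
    (of fun i j : ZMod N => (ZMod.stdAddChar (i * j) : ℂ)).IsHadamard := by
  refine .of_mul_conjTranspose (fun i j => stdAddChar_mem_unitary _) ?_
    (.of_ne_zero (Nat.cast_ne_zero.2 Fintype.card_ne_zero))
  ext i j
  have hsummand (m : ZMod N) :
      (ZMod.stdAddChar (i * m) : ℂ) * star (ZMod.stdAddChar (j * m) : ℂ) =
        ZMod.stdAddChar (m * (i - j)) := by
    rw [star_stdAddChar, ← AddChar.map_add_eq_mul]
    congr 1
    ring
  simp only [mul_apply, conjTranspose_apply, of_apply, hsummand,
    AddChar.sum_mulShift _ (ZMod.isPrimitive_stdAddChar N), sub_eq_zero,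
    Matrix.smul_apply, one_apply, smul_eq_mul, Nat.cast_ite, Nat.cast_zero, mul_ite, mul_one,
    mul_zero]

theorem exists_isHadamard_fin (d : ℕ) [NeZero d] :
    ∃ H : Matrix (Fin d) (Fin d) ℂ, H.IsHadamard :=
  let e := (ZMod.finEquiv d).symm.toEquiv
  ⟨_, (isHadamard_stdAddChar d).reindex e e⟩

theorem localConj_maxEntangled_of_isHadamard {H : Matrix ι ι ℂ} (hH : H.IsHadamard) :
    localConj (H.map star) H (maxEntangled ι) = ((Fintype.card ι : ℝ) ^ 2) • maxEntangled ι := by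
  have hvec : H * (H.map star)ᵀ = (Fintype.card ι : ℂ) • 1 := hH.mul_conjTranspose
  rw [localConj_maxEntangled, hvec, maxEntangled, vec_smul]
  ext p q
  simp only [star_smul, star_natCast, vecMulVec_apply, Pi.smul_apply, vec, smul_eq_mul,
    Pi.star_apply, RCLike.star_def, Matrix.smul_apply, Complex.real_smul, Complex.ofReal_pow,
    Complex.ofReal_natCast]
  ring

/-- The matrix `H` with row `i` multiplied by the cube root of unity of index `t i`. -/
noncomputable def rephase (H : Matrix ι ι ℂ) (t : ι → ZMod 3) : Matrix ι ι ℂ :=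
  diagonal (fun i => ZMod.stdAddChar (t i)) * H

theorem isHadamard_rephase {H : Matrix ι ι ℂ} (hH : H.IsHadamard) (t : ι → ZMod 3) :
    (rephase H t).IsHadamard :=
  isHadamard_diagonal_mul hH fun i => stdAddChar_mem_unitary (t i)

theorem sum_localConj_rephase_classicallyCorrelated {H : Matrix ι ι ℂ} (hH : H.IsHadamard) :
    ∑ t, localConj ((rephase H t).map star) (rephase H t) (classicallyCorrelated ι) =
      (3 ^ Fintype.card ι * Fintype.card ι : ℝ) •
        (maxEntangled ι + 1 - classicallyCorrelated ι) := by
  ext ⟨i, j⟩ ⟨k, l⟩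
  let c (m : ι) : ℂ := star (H i m) * H j m * (H k m * star (H l m))
  have hentry (t : ι → ZMod 3) :
      localConj ((rephase H t).map star) (rephase H t) (classicallyCorrelated ι) (i, j) (k, l) =
        (∑ m, c m) * (star (ZMod.stdAddChar (t i) : ℂ) * ZMod.stdAddChar (t j) *
          (ZMod.stdAddChar (t k) * star (ZMod.stdAddChar (t l) : ℂ))) := by
    simp only [localConj_classicallyCorrelated_apply, rephase, map_apply, diagonal_mul, star_mul',
      star_star, Finset.sum_mul, c]
    exact Finset.sum_congr rfl fun m _ => by ring
  have hc (h : (i = j ∧ k = l) ∨ (i = k ∧ j = l)) : ∑ m, c m = Fintype.card ι := by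
    have hunit (i m : ι) : star (H i m) * H i m = 1 := (Unitary.mem_iff.1 (hH.apply_mem i m)).1
    have hone (m : ι) : c m = 1 := by
      rcases h with ⟨rfl, rfl⟩ | ⟨rfl, rfl⟩
      · linear_combination star (H k m) * H k m * hunit i m + hunit k m
      · linear_combination star (H j m) * H j m * hunit i m + hunit j m
    simp [hone]
  rw [Matrix.sum_apply, Finset.sum_congr rfl fun t _ => hentry t, ← Finset.mul_sum,
    sum_stdAddChar_quartic]
  simp only [Matrix.smul_apply, Matrix.sub_apply, Matrix.add_apply, maxEntangled_apply,
    classicallyCorrelated_apply, one_apply, Prod.mk.injEq, Complex.real_smul]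
  by_cases hij : i = j ∧ k = l <;> by_cases hik : i = k ∧ j = l <;>
    simp [hij, hik, hc, mul_comm]

end Twirl

section SubsetAverage

variable {ι : Type*} [Fintype ι] [DecidableEq ι]

theorem card_sub_one_mul_card_filter_pair_subset (n : ℕ) {i j : ι} (hij : i ≠ j) :
    (Fintype.card ι - 1) * ((Finset.univ.powersetCard n).filter ({i, j} ⊆ ·)).card =
      (n - 1) * (Fintype.card ι - 1).choose (n - 1) := by
  have hpair : ({i, j} : Finset ι).card = 2 := Finset.card_pair hij
  have hcard : 2 ≤ Fintype.card ι := hpair ▸ Finset.card_le_univ _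
  obtain hn1 | hn2 := Nat.lt_or_ge n 2
  · have hempty : (Finset.univ.powersetCard n).filter ({i, j} ⊆ ·) = ∅ := by
      refine Finset.filter_eq_empty_iff.2 fun S hS hsub => ?_
      have hle := Finset.card_le_card hsub
      rw [hpair, (Finset.mem_powersetCard.1 hS).2] at hle
      omega
    rw [hempty, Finset.card_empty, mul_zero, Nat.sub_eq_zero_of_le (Nat.le_of_lt_succ hn1),
      zero_mul]
  · rw [Finset.card_filter_powersetCard_subset _ _ _ (Finset.subset_univ _) (hpair ▸ hn2), hpair,
      Finset.card_univ]
    obtain ⟨m, rfl⟩ := Nat.exists_eq_add_of_le' hn2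
    obtain ⟨e, he⟩ := Nat.exists_eq_add_of_le' hcard
    simpa [he, mul_comm] using Nat.add_one_mul_choose_eq e m

theorem card_filter_singleton_subset {n : ℕ} (hn : 1 ≤ n) (i : ι) :
    ((Finset.univ.powersetCard n).filter ({i} ⊆ ·)).card =
      (Fintype.card ι - 1).choose (n - 1) := by
  rw [Finset.card_filter_powersetCard_subset _ _ _ (Finset.subset_univ _) (by simpa using hn),
    Finset.card_singleton, Finset.card_univ]

/-- The vector `Σ_{i ∈ S} |ii⟩`. -/
def ketSubset (S : Finset ι) : ι × ι → ℂ :=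
  vec (diagonal fun i => if i ∈ S then 1 else 0)

theorem sum_powersetCard_vecMulVec_ketSubset {n : ℕ} (hn : 1 ≤ n) :
    (Fintype.card ι - 1 : ℝ) • ∑ S ∈ Finset.univ.powersetCard n,
        vecMulVec (ketSubset S) (star (ketSubset (ι := ι) S)) =
      ((Fintype.card ι - 1).choose (n - 1) : ℝ) •
        ((Fintype.card ι - n : ℝ) • classicallyCorrelated ι + (n - 1 : ℝ) • maxEntangled ι) := by
  ext ⟨i, j⟩ ⟨k, l⟩
  have hentry (S : Finset ι) : vecMulVec (ketSubset S) (star (ketSubset S)) (i, j) (k, l) =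
      if i = j ∧ k = l then if {i, k} ⊆ S then 1 else 0 else 0 := by
    simp only [vecMulVec_apply, ketSubset, vec, diagonal_apply, Pi.star_apply,
      Finset.insert_subset_iff, Finset.singleton_subset_iff]
    split_ifs <;> grind [star_one, star_zero]
  simp only [Matrix.smul_apply, Matrix.add_apply, Matrix.sum_apply, hentry, maxEntangled_apply,
    classicallyCorrelated_apply]
  by_cases hdiag : i = j ∧ k = l
  · obtain ⟨rfl, rfl⟩ := hdiag
    simp only [and_self, if_true, true_and, Finset.sum_boole]
    obtain rfl | hik := eq_or_ne i k
    · rw [Finset.pair_eq_singleton, card_filter_singleton_subset hn]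
      simp only [Complex.real_smul, Complex.ofReal_sub, Complex.ofReal_natCast, Complex.ofReal_one,
        ↓reduceIte, mul_one, sub_add_sub_cancel]
      ring
    · have h := card_sub_one_mul_card_filter_pair_subset n hik
      have hcard : 1 ≤ Fintype.card ι := Fintype.card_pos_iff.2 ⟨i⟩
      apply_fun ((↑) : ℕ → ℂ) at h
      push_cast [hn, hcard] at h
      simp only [Complex.real_smul, Complex.ofReal_sub, Complex.ofReal_natCast, Complex.ofReal_one,
        hik, ↓reduceIte, smul_zero, mul_one, zero_add]
      linear_combination h
  · simp [hdiag]

end SubsetAverage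

theorem toMat_vec {d : ℕ} (M : Matrix (Fin d) (Fin d) ℂ) : toMat d (vec M) = Mᵀ := rfl

theorem toMat_kronecker_mulVec {d : ℕ} (A B : Matrix (Fin d) (Fin d) ℂ)
    (w : Fin d × Fin d → ℂ) : toMat d ((A ⊗ₖ B) *ᵥ w) = A * toMat d w * Bᵀ := by
  obtain ⟨M, rfl⟩ := vec_bijective.surjective w
  rw [kronecker_mulVec_vec, toMat_vec, toMat_vec, transpose_mul, transpose_mul, transpose_transpose,
    mul_assoc]

theorem ketDiag_eq_vec (d : ℕ) (a : Fin d → ℝ) :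
    ketDiag d a = vec (diagonal fun i => (a i : ℂ)) := by
  ext ⟨i, j⟩
  simp only [ketDiag, vec, diagonal_apply]
  grind

namespace SchmidtNumberLE

variable {d n : ℕ} {X Y : Matrix (Fin d × Fin d) (Fin d × Fin d) ℂ}

theorem vecMulVec_star {w : Fin d × Fin d → ℂ} (hw : (toMat d w).rank ≤ n) :
    SchmidtNumberLE d (vecMulVec w (star w)) n :=
  ⟨1, fun _ => w, fun _ => hw, by simp⟩

theorem zero (d n : ℕ) : SchmidtNumberLE d 0 n :=
  ⟨0, Fin.elim0, fun i => i.elim0, by simp⟩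

theorem add (hX : SchmidtNumberLE d X n) (hY : SchmidtNumberLE d Y n) :
    SchmidtNumberLE d (X + Y) n := by
  obtain ⟨k, w, hw, rfl⟩ := hX
  obtain ⟨l, v, hv, rfl⟩ := hY
  refine ⟨k + l, Fin.append w v, fun i => ?_, by simp [Fin.sum_univ_add]⟩
  induction i using Fin.addCases <;> simp [hw, hv]

theorem sum {κ : Type*} {s : Finset κ} {X : κ → Matrix (Fin d × Fin d) (Fin d × Fin d) ℂ}
    (hX : ∀ i ∈ s, SchmidtNumberLE d (X i) n) : SchmidtNumberLE d (∑ i ∈ s, X i) n :=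
  Finset.sum_induction X (SchmidtNumberLE d · n) (fun _ _ => add) (zero d n) hX

theorem map_localConj (hX : SchmidtNumberLE d X n) (A B : Matrix (Fin d) (Fin d) ℂ) :
    SchmidtNumberLE d (localConj A B X) n := by
  obtain ⟨k, w, hw, rfl⟩ := hX
  refine ⟨k, fun i => (A ⊗ₖ B) *ᵥ w i, fun i => ?_, ?_⟩
  · rw [toMat_kronecker_mulVec]
    exact (rank_mul_le_left _ _).trans <| (rank_mul_le_right _ _).trans (hw i)
  · rw [map_sum]
    exact Finset.sum_congr rfl fun i _ => localConj_vecMulVec A B (w i)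

theorem smul {c : ℝ} (hc : 0 ≤ c) (hX : SchmidtNumberLE d X n) : SchmidtNumberLE d (c • X) n := by
  have hsq : (√c : ℂ) * √c = c := mod_cast Real.mul_self_sqrt hc
  have hconj : localConj ((√c : ℂ) • 1) 1 X = c • X := by
    ext p q
    simp [localConj_apply, smul_kronecker, ← mul_assoc, hsq]
  exact hconj ▸ hX.map_localConj _ _

theorem vecMulVec_ketSubset {S : Finset (Fin d)} (hS : S.card ≤ n) :
    SchmidtNumberLE d (vecMulVec (ketSubset S) (star (ketSubset S))) n := by
  refine vecMulVec_star ?_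
  rw [ketSubset, toMat_vec, diagonal_transpose, rank_diagonal]
  simpa [Fintype.card_subtype] using hS

end SchmidtNumberLE

section Isotropic

variable {d n : ℕ}

theorem schmidtNumberLE_classicallyCorrelated_add_smul_maxEntangled (hn : 1 ≤ n) (hnd : n < d) :
    SchmidtNumberLE d (classicallyCorrelated (Fin d) +
      ((n - 1 : ℝ) / (d - n)) • maxEntangled (Fin d)) n := by
  have hsum : SchmidtNumberLE d (∑ S ∈ (Finset.univ : Finset (Fin d)).powersetCard n,
      vecMulVec (ketSubset S) (star (ketSubset S))) n :=
    .sum fun S hS => .vecMulVec_ketSubset (Finset.mem_powersetCard.1 hS).2.le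
  have hr : (0 : ℝ) < (d - 1).choose (n - 1) := by exact_mod_cast Nat.choose_pos (by omega)
  have hdn : (0 : ℝ) < d - n := sub_pos.2 (by exact_mod_cast hnd)
  have hd : (0 : ℝ) ≤ d - 1 := sub_nonneg.2 (by exact_mod_cast hn.trans hnd.le)
  have havg := sum_powersetCard_vecMulVec_ketSubset (ι := Fin d) hn
  rw [Fintype.card_fin] at havg
  convert (hsum.smul hd).smul (c := ((d - 1).choose (n - 1) * (d - n : ℝ))⁻¹) (by positivity)
  rw [havg]
  match_scalars <;> field_simp

theorem SchmidtNumberLE.smul_maxEntangled_add_one [NeZero d] {s : ℝ}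
    (h : SchmidtNumberLE d (classicallyCorrelated (Fin d) + s • maxEntangled (Fin d)) n) :
    SchmidtNumberLE d ((1 + (d + 1) * s) • maxEntangled (Fin d) + 1) n := by
  obtain ⟨H, hH⟩ := exists_isHadamard_fin d
  have htwirl : SchmidtNumberLE d (∑ t, localConj ((rephase H t).map star) (rephase H t)
      (classicallyCorrelated (Fin d) + s • maxEntangled (Fin d))) n :=
    .sum fun t _ => h.map_localConj _ _
  have hvalue : ∑ t, localConj ((rephase H t).map star) (rephase H t)
        (classicallyCorrelated (Fin d) + s • maxEntangled (Fin d)) =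
      (3 ^ d * d : ℝ) • (maxEntangled (Fin d) + 1 - classicallyCorrelated (Fin d) +
        (d * s) • maxEntangled (Fin d)) := by
    simp only [map_add, LinearMap.map_smul_of_tower, Finset.sum_add_distrib,
      sum_localConj_rephase_classicallyCorrelated hH,
      localConj_maxEntangled_of_isHadamard (isHadamard_rephase hH _), Finset.sum_const,
      Finset.card_univ, Fintype.card_fun, ZMod.card, Fintype.card_fin]
    module
  have hd : (d : ℝ) ≠ 0 := NeZero.ne _
  convert h.add (htwirl.smul (c := (3 ^ d * d : ℝ)⁻¹) (by positivity)) using 1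
  rw [hvalue, inv_smul_smul₀ (by positivity)]
  module

theorem schmidtNumberLE_isotropic (hn : 1 ≤ n) (hnd : n < d) :
    SchmidtNumberLE d (((d * n - 1 : ℝ) / (d - n)) • maxEntangled (Fin d) + 1) n := by
  have : NeZero d := ⟨by omega⟩
  have hdn : (d - n : ℝ) ≠ 0 := sub_ne_zero.2 (by exact_mod_cast hnd.ne')
  have hcoeff : (d * n - 1 : ℝ) / (d - n) = 1 + (d + 1) * ((n - 1) / (d - n)) := by
    field_simp
    ring
  rw [hcoeff]
  have h := schmidtNumberLE_classicallyCorrelated_add_smul_maxEntangled hn hnd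
  exact h.smul_maxEntangled_add_one

end Isotropic

theorem intermediate_random_schmidt_bound_general {d n : ℕ} (hn : 1 ≤ n) (hnd : n < d)
    {a : Fin d → ℝ} (ha : ∀ i, 0 ≤ a i) :
    SchmidtNumberLE d
      ((((d : ℝ) * n - 1) / ((d : ℝ) - n)) •
          Matrix.vecMulVec (ketDiag d a) (star (ketDiag d a)) +
        Matrix.diagonal (fun p : Fin d × Fin d => ((a p.1 * a p.2 : ℝ) : ℂ))) n := by
  let D : Matrix (Fin d) (Fin d) ℂ := diagonal fun i => (√(a i) : ℂ)
  have hD : D * D = diagonal fun i => (a i : ℂ) := by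
    simp only [D, diagonal_mul_diagonal, ← Complex.ofReal_mul, Real.mul_self_sqrt (ha _)]
  have hDT : Dᵀ = D := diagonal_transpose _
  have hDH : Dᴴ = D := by simp [D, diagonal_conjTranspose, Pi.star_def]
  have hψ : localConj D D (maxEntangled (Fin d)) =
      vecMulVec (ketDiag d a) (star (ketDiag d a)) := by
    rw [localConj_maxEntangled, hDT, hD, ketDiag_eq_vec]
  have hdiag : localConj D D 1 = diagonal fun p => ((a p.1 * a p.2 : ℝ) : ℂ) := by
    simp only [localConj_one, hDH, hD, diagonal_kronecker_diagonal, Complex.ofReal_mul]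
  rw [← hψ, ← hdiag, ← LinearMap.map_smul_of_tower, ← map_add]
  exact (schmidtNumberLE_isotropic hn hnd).map_localConj D D

/-- `((dn-1)/(d-n)) ψψᴴ + Σ_{i,j} a_i a_j |ij⟩⟨ij|` has Schmidt number at most `n`. -/
theorem intermediate_random_schmidt_bound (d n : ℕ) (hd : 2 ≤ d) (hn : 1 ≤ n) (hnd : n < d)
    (a : Fin d → ℝ) (ha : ∀ i, 0 ≤ a i) (hnorm : ∑ i, a i ^ 2 = 1) :
    SchmidtNumberLE d
      ((((d : ℝ) * n - 1) / ((d : ℝ) - n)) •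
          Matrix.vecMulVec (ketDiag d a) (star (ketDiag d a)) +
        Matrix.diagonal (fun p : Fin d × Fin d => ((a p.1 * a p.2 : ℝ) : ℂ))) n := by
  exact intermediate_random_schmidt_bound_general hn hnd ha
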